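/- Let 0 ≤ a < b ≤ 1, M > 1, and suppose f, f_n ∈ G_M² for all n, where G_M = {g ∈ E : s/M ≤ g(s) ≤ Ms ∀s}. Write R*_X(x,y) = (y/(2x))·(y/x ∨ x/y)·(indicator adjustments) so that R*_X is continuous and bounded by M² on the range of M-good functions, and f' denotes the a.e. derivative. If f is differentiable on [a,b] and d(f_n,f) → 0, then limsup_n ∫_a^b √(R*_X(f_n(s))·f'_{n,X}(s)) ds ≤ ∫_a^b √(R*_X(f(s))·f'_X(s)) ds. -/

import Mathlib

open Filter Topology

/-- A member of the space `E`: a non-decreasing càdlàg function on `[0,1]` with `f(0) = 0`,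
extended to `ℝ` by constants. -/
def IsE (f : ℝ → ℝ) : Prop :=
  Monotone f ∧ f 0 = 0 ∧ (∀ x ≤ (0:ℝ), f x = 0) ∧ (∀ x, (1:ℝ) ≤ x → f x = f 1) ∧
    ∀ x, ContinuousWithinAt f (Set.Ici x) x

/-- The Lévy metric on `E`. -/
noncomputable def levyDist (f g : ℝ → ℝ) : ℝ :=
  sInf {r : ℝ | 0 < r ∧ ∀ x ∈ Set.Icc (-r) (1 + r), f (x - r) - r < g x ∧ g x < f (x + r) + r}

/-- Product (max) Lévy metric on `E²`. -/
noncomputable def dE2 (f g : (ℝ → ℝ) × (ℝ → ℝ)) : ℝ :=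
  max (levyDist f.1 g.1) (levyDist f.2 g.2)

/-- `f ∈ G_{M,T}`: `s/M − 2T^{−2/3} ≤ f(s) ≤ M(s + 2T^{−2/3})` for all `s ∈ [0,1]`. -/
def GoodMT (M T : ℝ) (f : ℝ → ℝ) : Prop :=
  ∀ s ∈ Set.Icc (0:ℝ) 1,
    s / M - 2 * T ^ (-(2:ℝ)/3) ≤ f s ∧ f s ≤ M * (s + 2 * T ^ (-(2:ℝ)/3))

/-- `f ∈ G_M`: `s/M ≤ f(s) ≤ Ms` for all `s ∈ [0,1]`. -/
def Good (M : ℝ) (f : ℝ → ℝ) : Prop :=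
  ∀ s ∈ Set.Icc (0:ℝ) 1, s / M ≤ f s ∧ f s ≤ M * s

/-- `f ∈ PL_n`: `f` is linear on each interval `[i/n, (i+1)/n]`. -/
def PLn (n : ℕ) (f : ℝ → ℝ) : Prop :=
  ∀ i : ℕ, i < n → ∀ s ∈ Set.Icc ((i:ℝ)/n) (((i:ℝ)+1)/n),
    f s = f ((i:ℝ)/n) + (s - (i:ℝ)/n) * ((n:ℝ) * (f (((i:ℝ)+1)/n) - f ((i:ℝ)/n)))

/-- `P*(x,y)`: limiting splitting probability. -/
noncomputable def PstarR (x y : ℝ) : ℝ :=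
  if x = 0 ∧ y = 0 then 1/2 else if y ≤ x then y / (2 * x) else 1 - x / (2 * y)

/-- `R*(x,y) = (x/y) ∨ (y/x)` (with `R*(0,0) = 1`). -/
noncomputable def RstarR (x y : ℝ) : ℝ :=
  if x = 0 ∧ y = 0 then 1 else max (x / y) (y / x)

/-- `R*_X = R*·P*` for `y > 0`, and `1/2` if `y = 0`. -/
noncomputable def RstarX (x y : ℝ) : ℝ :=
  if y = 0 then 1/2 else RstarR x y * PstarR x y

/-!
Let `F` and `G` be monotone with `F` being `C`-Lipschitz, and average `√(F' G')` over
`[s, s + h]`. By the Cauchy–Schwarz inequality the average is at most the geometric mean of the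
difference quotients of `F` and `G`, an expression that no longer involves derivatives and hence
passes to the limit when `F` and `G` converge almost everywhere. The difference quotients of `G` are
not uniformly integrable, so the geometric mean is cut off at a height `K`; what is lost is at most
`C / K` times the increment of `G`. Bounded convergence allows first the pair `(F, G)` to vary, then
`h → 0`, where Lebesgue's theorem on monotone functions returns `√(F' G')`, and finally `K → ∞`.
This gives upper semicontinuity of `∫ √(F' G')`.

For the cross term, `G` is the first component and `F` a primitive of `R*_X` along the path. Lévy
convergence is convergence at the continuity points of the limit, hence almost everywhere, and
`R*_X` is bounded and continuous along good pairs, so the primitives converge as well.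
-/

open MeasureTheory
open scoped NNReal

section CauchySchwarz

variable {α : Type*} [MeasurableSpace α] {μ : Measure α} {u v : α → ℝ}

lemma memLp_two_sqrt (hu : Integrable u μ) : MemLp (fun x => √(u x)) 2 μ := by
  have hmeas : AEStronglyMeasurable (fun x => √(u x)) μ :=
    Real.continuous_sqrt.comp_aestronglyMeasurable hu.aestronglyMeasurable
  rw [memLp_two_iff_integrable_sq hmeas]
  simpa only [Real.sq_sqrt'] using hu.pos_part

lemma integrable_sqrt_mul_sqrt (hu : Integrable u μ) (hv : Integrable v μ) :
    Integrable (fun x => √(u x) * √(v x)) μ :=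
  (memLp_two_sqrt hu).integrable_mul (memLp_two_sqrt hv)

lemma integral_sqrt_mul_sqrt_le (hu : Integrable u μ) (hv : Integrable v μ)
    (hu₀ : 0 ≤ᵐ[μ] u) (hv₀ : 0 ≤ᵐ[μ] v) :
    ∫ x, √(u x) * √(v x) ∂μ ≤ √((∫ x, u x ∂μ) * ∫ x, v x ∂μ) := by
  have hsq {w : α → ℝ} (hw₀ : 0 ≤ᵐ[μ] w) : ∫ x, √(w x) ^ (2 : ℝ) ∂μ = ∫ x, w x ∂μ :=
    integral_congr_ae <| hw₀.mono fun x hx => by simpa using Real.sq_sqrt hx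
  have hHolder := integral_mul_le_Lp_mul_Lq_of_nonneg (μ := μ) Real.HolderConjugate.two_two
    (.of_forall fun x => Real.sqrt_nonneg (u x)) (.of_forall fun x => Real.sqrt_nonneg (v x))
    (by simpa using memLp_two_sqrt hu) (by simpa using memLp_two_sqrt hv)
  rwa [hsq hu₀, hsq hv₀, ← Real.sqrt_eq_rpow, ← Real.sqrt_eq_rpow,
    ← Real.sqrt_mul (integral_nonneg_of_ae hu₀)] at hHolder

end CauchySchwarz

section MonotonePair

variable {F G : ℝ → ℝ} {a b h K : ℝ} {C : ℝ≥0}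

lemma intervalIntegrable_sqrt_deriv_mul_deriv (hF : Monotone F) (hG : Monotone G) (a b : ℝ) :
    IntervalIntegrable (fun s => √(deriv F s * deriv G s)) volume a b := by
  simp only [Real.sqrt_mul hF.deriv_nonneg]
  have hF' := (hF.monotoneOn (Set.uIcc a b)).intervalIntegrable_deriv
  have hG' := (hG.monotoneOn (Set.uIcc a b)).intervalIntegrable_deriv
  exact ⟨integrable_sqrt_mul_sqrt hF'.1 hG'.1, integrable_sqrt_mul_sqrt hF'.2 hG'.2⟩

lemma intervalIntegral_deriv_le_sub (hF : Monotone F) (hab : a ≤ b) :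
    ∫ s in a..b, deriv F s ≤ F b - F a := by
  have hmem := (hF.monotoneOn (Set.uIcc a b)).intervalIntegral_deriv_mem_uIcc
  rw [Set.uIcc_of_le (sub_nonneg.2 (hF hab))] at hmem
  exact hmem.2

lemma integral_sqrt_deriv_mul_deriv_le (hF : Monotone F) (hG : Monotone G) (hab : a ≤ b) :
    ∫ s in a..b, √(deriv F s * deriv G s) ≤ √((F b - F a) * (G b - G a)) := by
  have hCS := integral_sqrt_mul_sqrt_le
    (hF.monotoneOn (Set.uIcc a b)).intervalIntegrable_deriv.1
    (hG.monotoneOn (Set.uIcc a b)).intervalIntegrable_deriv.1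
    (.of_forall fun _ => hF.deriv_nonneg) (.of_forall fun _ => hG.deriv_nonneg)
  simp only [← Real.sqrt_mul hF.deriv_nonneg, ← intervalIntegral.integral_of_le hab] at hCS
  refine hCS.trans (Real.sqrt_le_sqrt ?_)
  exact mul_le_mul (intervalIntegral_deriv_le_sub hF hab) (intervalIntegral_deriv_le_sub hG hab)
    (intervalIntegral.integral_nonneg hab fun _ _ => hG.deriv_nonneg) (sub_nonneg.2 (hF hab))

lemma slope_integral_sqrt_deriv_mul_deriv_le (hF : Monotone F) (hG : Monotone G) (hh : 0 < h)
    (a s : ℝ) :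
    slope (fun t => ∫ x in a..t, √(deriv F x * deriv G x)) s (s + h) ≤
      √(slope F s (s + h) * slope G s (s + h)) := by
  have hint := intervalIntegrable_sqrt_deriv_mul_deriv hF hG
  have hCS := integral_sqrt_deriv_mul_deriv_le hF hG (le_add_of_nonneg_right hh.le : s ≤ s + h)
  simp only [slope_def_field, add_sub_cancel_left, div_mul_div_comm,
    intervalIntegral.integral_interval_sub_left (hint a (s + h)) (hint a s)]
  rw [Real.sqrt_div' _ (mul_self_nonneg h), Real.sqrt_mul_self hh.le]
  exact div_le_div_of_nonneg_right hCS hh.le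

lemma sub_le_intervalIntegral_slope (hF : Monotone F) (hh : 0 < h) (a b : ℝ) :
    F b - F (a + h) ≤ ∫ s in a..b, slope F s (s + h) := by
  have hint (x y : ℝ) : IntervalIntegrable F volume x y := hF.intervalIntegrable
  have hupper : ∫ s in a..a + h, F s ≤ h * F (a + h) := by
    simpa using intervalIntegral.integral_mono_on (le_add_of_nonneg_right hh.le) (hint a (a + h))
      intervalIntegrable_const fun s hs => hF hs.2
  have hlower : h * F b ≤ ∫ s in b..b + h, F s := by
    simpa using intervalIntegral.integral_mono_on (le_add_of_nonneg_right hh.le)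
      intervalIntegrable_const (hint b (b + h)) fun s hs => hF hs.1
  have hint_shift : IntervalIntegrable (fun s => F (s + h)) volume a b :=
    (hF.comp (add_left_mono (a := h))).intervalIntegrable
  simp only [slope_def_field, add_sub_cancel_left, intervalIntegral.integral_div]
  rw [intervalIntegral.integral_sub hint_shift (hint a b),
    intervalIntegral.integral_comp_add_right,
    intervalIntegral.integral_interval_sub_interval_comm' (hint _ _) (hint _ _) (hint _ _),
    le_div_iff₀ hh]
  linarith

lemma sqrt_mul_le_min_add {x y c : ℝ} (hx : x ≤ c) (hy : 0 ≤ y) (hK : 0 < K) (hc : 0 ≤ c) :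
    √(x * y) ≤ min √(x * y) K + c / K * y := by
  rcases le_total √(x * y) K with hle | hge
  · rw [min_eq_left hle]
    exact le_add_of_nonneg_right (by positivity)
  · have hsq : √(x * y) * √(x * y) ≤ c * y := by
      rw [Real.mul_self_sqrt (Real.sqrt_pos.1 (hK.trans_le hge)).le]
      gcongr
    have hdiv : √(x * y) ≤ c / K * y := by
      rw [div_mul_eq_mul_div, le_div_iff₀ hK]
      exact (mul_le_mul_of_nonneg_left hge (Real.sqrt_nonneg _)).trans hsq
    exact hdiv.trans (le_add_of_nonneg_left (le_min (Real.sqrt_nonneg _) hK.le))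

/-- The geometric mean of the difference quotients of `F` and `G` over `[s, s + h]`, cut off at
height `K`. As `h → 0` it tends to `min √(F' G') K`, and the cut-off makes bounded convergence
available. -/
noncomputable def truncatedSlopeMean (F G : ℝ → ℝ) (K h s : ℝ) : ℝ :=
  min √(slope F s (s + h) * slope G s (s + h)) K

lemma norm_truncatedSlopeMean_le (hK : 0 < K) (F G : ℝ → ℝ) (h s : ℝ) :
    ‖truncatedSlopeMean F G K h s‖ ≤ K := by
  rw [truncatedSlopeMean, Real.norm_of_nonneg (le_min (Real.sqrt_nonneg _) hK.le)]
  exact min_le_right _ _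

lemma measurable_truncatedSlopeMean (hF : Monotone F) (hG : Monotone G) (K h : ℝ) :
    Measurable (truncatedSlopeMean F G K h) := by
  have hslope {H : ℝ → ℝ} (hH : Monotone H) : Measurable fun s => slope H s (s + h) := by
    simp only [slope_def_field, add_sub_cancel_left]
    exact ((hH.measurable.comp (measurable_id.add_const h)).sub hH.measurable).div_const h
  exact ((hslope hF).mul (hslope hG)).sqrt.min measurable_const

lemma intervalIntegrable_truncatedSlopeMean (hF : Monotone F) (hG : Monotone G) (hK : 0 < K)
    (h a b : ℝ) : IntervalIntegrable (truncatedSlopeMean F G K h) volume a b :=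
  (intervalIntegrable_const (c := K)).mono_fun
    (measurable_truncatedSlopeMean hF hG K h).aestronglyMeasurable
    (.of_forall fun s =>
      (norm_truncatedSlopeMean_le hK F G h s).trans (Real.le_norm_self K))

lemma slope_le_of_lipschitzWith (hF : LipschitzWith C F) (x y : ℝ) : slope F x y ≤ C := by
  have hdist := hF.dist_le_mul y x
  rw [slope_def_field]
  refine (le_abs_self _).trans ?_
  rw [abs_div]
  exact div_le_of_le_mul₀ (abs_nonneg _) C.2 hdist

lemma integral_truncatedSlopeMean_sub_le (hF : Monotone F) (hG : Monotone G) (hK : 0 < K)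
    (hh : 0 ≤ h) (a b : ℝ) :
    ∫ s in (a - h)..b, truncatedSlopeMean F G K h s ≤
      h * K + ∫ s in a..b, truncatedSlopeMean F G K h s := by
  have hint := intervalIntegrable_truncatedSlopeMean hF hG hK h
  rw [← intervalIntegral.integral_add_adjacent_intervals (hint (a - h) a) (hint a b)]
  gcongr
  simpa using intervalIntegral.integral_mono_on (sub_le_self a hh) (hint (a - h) a)
    intervalIntegrable_const fun s _ => min_le_right _ K

lemma integral_sqrt_deriv_mul_deriv_le_truncated (hF : Monotone F) (hFC : LipschitzWith C F)
    (hG : Monotone G) (hab : a ≤ b) (hh : 0 < h) (hK : 0 < K) :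
    ∫ s in a..b, √(deriv F s * deriv G s) ≤
      h * K + (∫ s in a..b, truncatedSlopeMean F G K h s) + C / K * (G (b + h) - G (a - h)) := by
  let Φ (t : ℝ) : ℝ := ∫ s in a..t, √(deriv F s * deriv G s)
  have hφ := intervalIntegrable_sqrt_deriv_mul_deriv hF hG
  have hΦ : Monotone Φ := fun s t hst => by
    rw [← sub_nonneg, intervalIntegral.integral_interval_sub_left (hφ a t) (hφ a s)]
    exact intervalIntegral.integral_nonneg hst fun _ _ => Real.sqrt_nonneg _
  have hle : a - h ≤ b := (sub_le_self a hh.le).trans hab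
  have hT := intervalIntegrable_truncatedSlopeMean hF hG hK h (a - h) b
  have hslopeG := (hG.monotoneOn (Set.Icc (a - h) (b + h))).intervalIntegrable_slope hle hh.le
  calc Φ b
      = Φ b - Φ (a - h + h) := by simp [Φ]
    _ ≤ ∫ s in (a - h)..b, slope Φ s (s + h) := sub_le_intervalIntegral_slope hΦ hh _ _
    _ ≤ ∫ s in (a - h)..b, (truncatedSlopeMean F G K h s + C / K * slope G s (s + h)) :=
        intervalIntegral.integral_mono_on hle
          ((hΦ.monotoneOn _).intervalIntegrable_slope hle hh.le)
          (hT.add (hslopeG.const_mul _)) fun s _ =>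
          (slope_integral_sqrt_deriv_mul_deriv_le hF hG hh a s).trans <|
            sqrt_mul_le_min_add (slope_le_of_lipschitzWith hFC _ _)
              ((hG.monotoneOn Set.univ).slope_nonneg trivial trivial) hK C.2
    _ = (∫ s in (a - h)..b, truncatedSlopeMean F G K h s) +
          C / K * ∫ s in (a - h)..b, slope G s (s + h) := by
        rw [intervalIntegral.integral_add hT (hslopeG.const_mul _),
          intervalIntegral.integral_const_mul]
    _ ≤ h * K + (∫ s in a..b, truncatedSlopeMean F G K h s) +
          C / K * (G (b + h) - G (a - h)) := by
        gcongr
        · exact integral_truncatedSlopeMean_sub_le hF hG hK hh.le a b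
        · exact (hG.monotoneOn _).intervalIntegral_slope_le hle hh.le

lemma tendsto_integral_truncatedSlopeMean_zero (hF : Monotone F) (hG : Monotone G) (hK : 0 < K)
    (a b : ℝ) :
    Tendsto (fun h => ∫ s in a..b, truncatedSlopeMean F G K h s) (𝓝[>] 0)
      (𝓝 (∫ s in a..b, min √(deriv F s * deriv G s) K)) := by
  refine intervalIntegral.tendsto_integral_filter_of_dominated_convergence (fun _ => K)
    (.of_forall fun h => (measurable_truncatedSlopeMean hF hG K h).aestronglyMeasurable)
    (.of_forall fun h => .of_forall fun s _ => norm_truncatedSlopeMean_le hK F G h s)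
    intervalIntegrable_const ?_
  filter_upwards [hF.ae_differentiableAt, hG.ae_differentiableAt] with s hFs hGs _
  have hslope {H : ℝ → ℝ} (hH : DifferentiableAt ℝ H s) :
      Tendsto (fun h => slope H s (s + h)) (𝓝[>] 0) (𝓝 (deriv H s)) := by
    simpa [slope] using hH.hasDerivAt.tendsto_slope_zero_right
  exact ((hslope hFs).mul (hslope hGs)).sqrt.min tendsto_const_nhds

lemma integral_min_sqrt_deriv_mul_deriv_le (hF : Monotone F) (hG : Monotone G) (hab : a ≤ b)
    (K : ℝ) :
    ∫ s in a..b, min √(deriv F s * deriv G s) K ≤ ∫ s in a..b, √(deriv F s * deriv G s) := by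
  have hint := intervalIntegrable_sqrt_deriv_mul_deriv hF hG a b
  exact intervalIntegral.integral_mono_on hab
    ⟨hint.1.inf (integrable_const K), hint.2.inf (integrable_const K)⟩ hint
    fun s _ => min_le_left _ _

end MonotonePair

section Limsup

variable {ι : Type*} {l : Filter ι}

lemma tendsto_integral_truncatedSlopeMean [l.IsCountablyGenerated] {F G : ι → ℝ → ℝ}
    {F₀ G₀ : ℝ → ℝ} {K : ℝ} (hF : ∀ i, Monotone (F i)) (hG : ∀ i, Monotone (G i))
    (hF_lim : ∀ᵐ s, Tendsto (fun i => F i s) l (𝓝 (F₀ s)))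
    (hG_lim : ∀ᵐ s, Tendsto (fun i => G i s) l (𝓝 (G₀ s))) (hK : 0 < K) (h a b : ℝ) :
    Tendsto (fun i => ∫ s in a..b, truncatedSlopeMean (F i) (G i) K h s) l
      (𝓝 (∫ s in a..b, truncatedSlopeMean F₀ G₀ K h s)) := by
  refine intervalIntegral.tendsto_integral_filter_of_dominated_convergence (fun _ => K)
    (.of_forall fun i => (measurable_truncatedSlopeMean (hF i) (hG i) K h).aestronglyMeasurable)
    (.of_forall fun i => .of_forall fun s _ => norm_truncatedSlopeMean_le hK _ _ h s)
    intervalIntegrable_const ?_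
  filter_upwards [hF_lim, hG_lim, (eventually_add_right_iff volume h).2 hF_lim,
    (eventually_add_right_iff volume h).2 hG_lim] with s hFs hGs hFsh hGsh _
  simp only [truncatedSlopeMean, slope_def_field]
  exact (((hFsh.sub hFs).div_const _).mul ((hGsh.sub hGs).div_const _)).sqrt.min
    tendsto_const_nhds

variable [l.NeBot] [l.IsCountablyGenerated] {F G : ι → ℝ → ℝ} {F₀ G₀ : ℝ → ℝ} {C : ℝ≥0} {a b : ℝ}

lemma limsup_integral_le_truncated {K h L R : ℝ} (hF : ∀ i, Monotone (F i))
    (hFC : ∀ i, LipschitzWith C (F i)) (hG : ∀ i, Monotone (G i))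
    (hF_lim : ∀ᵐ s, Tendsto (fun i => F i s) l (𝓝 (F₀ s)))
    (hG_lim : ∀ᵐ s, Tendsto (fun i => G i s) l (𝓝 (G₀ s)))
    (hL_lim : Tendsto (fun i => G i L) l (𝓝 (G₀ L)))
    (hR_lim : Tendsto (fun i => G i R) l (𝓝 (G₀ R)))
    (hab : a ≤ b) (hh : 0 < h) (hK : 0 < K) (hL : L ≤ a - h) (hR : b + h ≤ R) :
    limsup (fun i => ∫ s in a..b, √(deriv (F i) s * deriv (G i) s)) l ≤
      h * K + (∫ s in a..b, truncatedSlopeMean F₀ G₀ K h s) + C / K * (G₀ R - G₀ L) := by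
  have hlim : Tendsto (fun i => h * K + (∫ s in a..b, truncatedSlopeMean (F i) (G i) K h s) +
      C / K * (G i R - G i L)) l
      (𝓝 (h * K + (∫ s in a..b, truncatedSlopeMean F₀ G₀ K h s) + C / K * (G₀ R - G₀ L))) :=
    ((tendsto_integral_truncatedSlopeMean hF hG hF_lim hG_lim hK h a b).const_add _).add
      ((hR_lim.sub hL_lim).const_mul _)
  rw [← hlim.limsup_eq]
  refine limsup_le_limsup (.of_forall fun i => ?_)
    (isCoboundedUnder_le_of_le l fun i =>
      intervalIntegral.integral_nonneg hab fun s _ => Real.sqrt_nonneg _)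
    hlim.isBoundedUnder_le
  refine (integral_sqrt_deriv_mul_deriv_le_truncated (hF i) (hFC i) (hG i) hab hh hK).trans ?_
  dsimp only
  gcongr
  · exact hG i hR
  · exact hG i hL

theorem limsup_integral_sqrt_deriv_mul_deriv_le (hF : ∀ i, Monotone (F i))
    (hFC : ∀ i, LipschitzWith C (F i)) (hG : ∀ i, Monotone (G i)) (hF₀ : Monotone F₀)
    (hG₀ : Monotone G₀) (hF_lim : ∀ᵐ s, Tendsto (fun i => F i s) l (𝓝 (F₀ s)))
    (hG_lim : ∀ᵐ s, Tendsto (fun i => G i s) l (𝓝 (G₀ s))) (hab : a ≤ b) :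
    limsup (fun i => ∫ s in a..b, √(deriv (F i) s * deriv (G i) s)) l ≤
      ∫ s in a..b, √(deriv F₀ s * deriv G₀ s) := by
  have hdense := Measure.dense_of_ae hG_lim
  obtain ⟨L, hL_lim, hL⟩ := hdense.exists_lt (a - 1)
  obtain ⟨R, hR_lim, hR⟩ := hdense.exists_gt (b + 1)
  have hbound_K (K : ℝ) (hK : 0 < K) :
      limsup (fun i => ∫ s in a..b, √(deriv (F i) s * deriv (G i) s)) l ≤
        (∫ s in a..b, √(deriv F₀ s * deriv G₀ s)) + C / K * (G₀ R - G₀ L) := by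
    have hlim_h : Tendsto (fun h => h * K + (∫ s in a..b, truncatedSlopeMean F₀ G₀ K h s) +
        C / K * (G₀ R - G₀ L)) (𝓝[>] 0)
        (𝓝 (0 * K + (∫ s in a..b, min √(deriv F₀ s * deriv G₀ s) K) +
          C / K * (G₀ R - G₀ L))) :=
      (((tendsto_nhdsWithin_of_tendsto_nhds tendsto_id).mul_const K).add
        (tendsto_integral_truncatedSlopeMean_zero hF₀ hG₀ hK a b)).add_const _
    have hle_h := ge_of_tendsto hlim_h <| by
      filter_upwards [Ioc_mem_nhdsGT one_pos] with h hh
      exact limsup_integral_le_truncated hF hFC hG hF_lim hG_lim hL_lim hR_lim hab hh.1 hK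
        (by linarith [hh.2]) (by linarith [hh.2])
    rw [zero_mul, zero_add] at hle_h
    grw [hle_h, integral_min_sqrt_deriv_mul_deriv_le hF₀ hG₀ hab K]
  have hlim_K : Tendsto (fun K : ℝ => (∫ s in a..b, √(deriv F₀ s * deriv G₀ s)) +
      C / K * (G₀ R - G₀ L)) atTop (𝓝 ((∫ s in a..b, √(deriv F₀ s * deriv G₀ s)) +
        0 * (G₀ R - G₀ L))) :=
    ((tendsto_id.const_div_atTop (C : ℝ)).mul_const _).const_add _
  simpa using ge_of_tendsto hlim_K ((eventually_gt_atTop 0).mono hbound_K)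

end Limsup

section BoundedDensity

variable {q : ℝ → ℝ} {C : ℝ≥0} {a b : ℝ}

lemma locallyIntegrable_of_ae_norm_le {c : ℝ} (hq_meas : AEStronglyMeasurable q)
    (hq : ∀ᵐ s, ‖q s‖ ≤ c) : LocallyIntegrable q :=
  (locallyIntegrable_const c).mono hq_meas (hq.mono fun _ hs => hs.trans (Real.le_norm_self c))

lemma intervalIntegrable_of_locallyIntegrable (hq_int : LocallyIntegrable q) (a b : ℝ) :
    IntervalIntegrable q volume a b :=
  (hq_int.integrableOn_isCompact isCompact_uIcc).intervalIntegrable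

lemma monotone_primitive (hq_int : LocallyIntegrable q) (hq : 0 ≤ᵐ[volume] q) (a : ℝ) :
    Monotone fun t => ∫ s in a..t, q s := fun t u htu => by
  have hint := intervalIntegrable_of_locallyIntegrable hq_int
  rw [← sub_nonneg, intervalIntegral.integral_interval_sub_left (hint a u) (hint a t)]
  exact intervalIntegral.integral_nonneg_of_ae htu hq

lemma lipschitzWith_primitive (hq_int : LocallyIntegrable q) (hq : ∀ᵐ s, ‖q s‖ ≤ C) (a : ℝ) :
    LipschitzWith C fun t => ∫ s in a..t, q s := by
  have hint := intervalIntegrable_of_locallyIntegrable hq_int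
  refine LipschitzWith.of_dist_le_mul fun t u => ?_
  rw [dist_eq_norm, intervalIntegral.integral_interval_sub_left (hint a t) (hint a u)]
  exact intervalIntegral.norm_integral_le_of_norm_le_const_ae (hq.mono fun s hs _ => hs)

lemma integral_sqrt_mul_eq_deriv_primitive (hq_int : LocallyIntegrable q) (g : ℝ → ℝ) (c a b : ℝ) :
    ∫ s in a..b, √(q s * g s) = ∫ s in a..b, √(deriv (fun t => ∫ x in c..t, q x) s * g s) :=
  intervalIntegral.integral_congr_ae <|
    (LocallyIntegrable.ae_hasDerivAt_integral hq_int).mono fun s hs _ => by rw [(hs c).deriv]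

variable {ι : Type*} {l : Filter ι} [l.NeBot] [l.IsCountablyGenerated]
  {qn g : ι → ℝ → ℝ} {g₀ : ℝ → ℝ}

theorem limsup_integral_sqrt_mul_deriv_le (hqn_meas : ∀ i, AEStronglyMeasurable (qn i))
    (hqn : ∀ i s, qn i s ∈ Set.Icc 0 (C : ℝ)) (hg : ∀ i, Monotone (g i)) (hg₀ : Monotone g₀)
    (hq_lim : ∀ᵐ s, Tendsto (fun i => qn i s) l (𝓝 (q s)))
    (hg_lim : ∀ᵐ s, Tendsto (fun i => g i s) l (𝓝 (g₀ s))) (hab : a ≤ b) :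
    limsup (fun i => ∫ s in a..b, √(qn i s * deriv (g i) s)) l ≤
      ∫ s in a..b, √(q s * deriv g₀ s) := by
  have hnorm {x : ℝ} (hx : x ∈ Set.Icc 0 (C : ℝ)) : ‖x‖ ≤ C :=
    (Real.norm_of_nonneg hx.1).trans_le hx.2
  have hqn_int (i : ι) :=
    locallyIntegrable_of_ae_norm_le (hqn_meas i) (.of_forall fun s => hnorm (hqn i s))
  have hq : ∀ᵐ s, q s ∈ Set.Icc 0 (C : ℝ) :=
    hq_lim.mono fun s hs => isClosed_Icc.mem_of_tendsto hs (.of_forall fun i => hqn i s)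
  have hq_int :=
    locallyIntegrable_of_ae_norm_le (aestronglyMeasurable_of_tendsto_ae l hqn_meas hq_lim)
      (hq.mono fun _ => hnorm)
  have hprimitive_lim (t : ℝ) :
      Tendsto (fun i => ∫ s in 0..t, qn i s) l (𝓝 (∫ s in 0..t, q s)) :=
    intervalIntegral.tendsto_integral_filter_of_dominated_convergence (fun _ => (C : ℝ))
      (.of_forall fun i => (hqn_meas i).restrict)
      (.of_forall fun i => .of_forall fun s _ => hnorm (hqn i s))
      intervalIntegrable_const (hq_lim.mono fun s hs _ => hs)
  simp only [integral_sqrt_mul_eq_deriv_primitive hq_int _ 0,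
    fun i => integral_sqrt_mul_eq_deriv_primitive (hqn_int i) (deriv (g i)) 0]
  exact limsup_integral_sqrt_deriv_mul_deriv_le
    (fun i => monotone_primitive (hqn_int i) (.of_forall fun s => (hqn i s).1) 0)
    (fun i => lipschitzWith_primitive (hqn_int i) (.of_forall fun s => hnorm (hqn i s)) 0) hg
    (monotone_primitive hq_int (hq.mono fun s hs => hs.1) 0) hg₀
    (.of_forall hprimitive_lim) hg_lim hab

end BoundedDensity

section LevyConvergence

variable {f g : ℝ → ℝ}

lemma IsE.apply_mem_Icc (hf : IsE f) (x : ℝ) : f x ∈ Set.Icc 0 (f 1) := by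
  obtain ⟨hmono, -, hleft, hright, -⟩ := hf
  constructor
  · rw [← hleft _ (min_le_right x 0)]
    exact hmono (min_le_left x 0)
  · rw [← hright _ (le_max_right x 1)]
    exact hmono (le_max_left x 1)

lemma levyDist_nonneg (f g : ℝ → ℝ) : 0 ≤ levyDist f g :=
  Real.sInf_nonneg fun _ hr => hr.1.le

lemma IsE.lt_and_lt_of_forall_Icc (hf : IsE f) (hg : IsE g) {r : ℝ} (hr : 0 < r)
    (hbound : ∀ x ∈ Set.Icc (-r) (1 + r), f (x - r) - r < g x ∧ g x < f (x + r) + r) (x : ℝ) :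
    f (x - r) - r < g x ∧ g x < f (x + r) + r := by
  rcases lt_or_ge x (-r) with hx | hx
  · rw [hf.2.2.1 (x - r) (by linarith), hg.2.2.1 x (by linarith), hf.2.2.1 (x + r) (by linarith)]
    constructor <;> linarith
  rcases le_or_gt x (1 + r) with hx' | hx'
  · exact hbound x ⟨hx, hx'⟩
  · have hend := hbound (1 + r) ⟨by linarith, le_rfl⟩
    have hf_right := hf.2.2.2.1
    have hg_right := hg.2.2.2.1
    rw [hf_right (1 + r - r) (by linarith), hg_right (1 + r) (by linarith),
      hf_right (1 + r + r) (by linarith)] at hend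
    rwa [hf_right (x - r) (by linarith), hg_right x (by linarith),
      hf_right (x + r) (by linarith)]

lemma IsE.mem_Icc_of_levyDist_lt (hf : IsE f) (hg : IsE g) {ε : ℝ} (hε : levyDist f g < ε)
    (x : ℝ) : f x ∈ Set.Icc (g (x - ε) - ε) (g (x + ε) + ε) := by
  have hnonempty : {r : ℝ | 0 < r ∧ ∀ x ∈ Set.Icc (-r) (1 + r),
      f (x - r) - r < g x ∧ g x < f (x + r) + r}.Nonempty := by
    have hf₁ := (hf.apply_mem_Icc 1).1
    have hg₁ := (hg.apply_mem_Icc 1).1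
    refine ⟨f 1 + g 1 + 1, by linarith, fun x _ => ⟨?_, ?_⟩⟩
    · linarith [(hf.apply_mem_Icc (x - (f 1 + g 1 + 1))).2, (hg.apply_mem_Icc x).1]
    · linarith [(hf.apply_mem_Icc (x + (f 1 + g 1 + 1))).1, (hg.apply_mem_Icc x).2]
  obtain ⟨r, ⟨hr, hbound⟩, hrε⟩ := exists_lt_of_csInf_lt hnonempty hε
  have hbound := hf.lt_and_lt_of_forall_Icc hg hr hbound
  have hlower := (hbound (x - r)).2
  have hupper := (hbound (x + r)).1
  rw [sub_add_cancel] at hlower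
  rw [add_sub_cancel_right] at hupper
  exact ⟨by linarith [hg.1 (by linarith : x - ε ≤ x - r)],
    by linarith [hg.1 (by linarith : x + r ≤ x + ε)]⟩

variable {ι : Type*} {l : Filter ι} {fn : ι → ℝ → ℝ}

lemma IsE.tendsto_of_tendsto_levyDist (hfn : ∀ i, IsE (fn i)) (hf : IsE f)
    (hlim : Tendsto (fun i => levyDist (fn i) f) l (𝓝 0)) {x : ℝ} (hx : ContinuousAt f x) :
    Tendsto (fun i => fn i x) l (𝓝 (f x)) := by
  have hshift {σ : ℝ} : Tendsto (fun ε => f (x + σ * ε) + σ * ε) (𝓝[>] 0) (𝓝 (f x)) := by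
    have hσ : ContinuousAt (fun ε => f (x + σ * ε) + σ * ε) 0 := by
      refine ContinuousAt.add (ContinuousAt.comp ?_ (by fun_prop)) (by fun_prop)
      simpa using hx
    simpa using hσ.tendsto.mono_left nhdsWithin_le_nhds
  refine tendsto_order.2 ⟨fun c hc => ?_, fun c hc => ?_⟩
  · obtain ⟨ε, hcε, hε⟩ :=
      ((hshift (σ := -1)).eventually_const_lt hc |>.and self_mem_nhdsWithin).exists
    rw [neg_one_mul, ← sub_eq_add_neg, ← sub_eq_add_neg] at hcε
    filter_upwards [hlim.eventually_lt_const hε] with i hi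
    exact hcε.trans_le ((hfn i).mem_Icc_of_levyDist_lt hf hi x).1
  · obtain ⟨ε, hcε, hε⟩ :=
      ((hshift (σ := 1)).eventually_lt_const hc |>.and self_mem_nhdsWithin).exists
    rw [one_mul] at hcε
    filter_upwards [hlim.eventually_lt_const hε] with i hi
    exact (((hfn i).mem_Icc_of_levyDist_lt hf hi x).2).trans_lt hcε

lemma IsE.ae_tendsto_of_tendsto_levyDist (hfn : ∀ i, IsE (fn i)) (hf : IsE f)
    (hlim : Tendsto (fun i => levyDist (fn i) f) l (𝓝 0)) :
    ∀ᵐ x, Tendsto (fun i => fn i x) l (𝓝 (f x)) :=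
  (hf.1.countable_not_continuousAt.ae_notMem volume).mono fun _ hx =>
    IsE.tendsto_of_tendsto_levyDist hfn hf hlim (not_not.1 hx)

end LevyConvergence

section CrossTermWeight

lemma RstarX_zero_zero : RstarX 0 0 = 1 / 2 := if_pos rfl

lemma RstarX_of_pos {x y : ℝ} (hx : 0 < x) (hy : 0 < y) :
    RstarX x y = max (1 / 2) (y / x - 1 / 2) := by
  have hxy : ¬(x = 0 ∧ y = 0) := fun h => hx.ne' h.1
  rw [RstarX, if_neg hy.ne', RstarR, if_neg hxy, PstarR, if_neg hxy]
  rcases le_or_gt y x with hle | hlt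
  · have hratio : y / x ≤ 1 := (div_le_one hx).2 hle
    have hratio' : 1 ≤ x / y := (one_le_div hy).2 hle
    rw [if_pos hle, max_eq_left (hratio.trans hratio'), max_eq_left (by linarith)]
    field_simp
  · have hratio : 1 < y / x := (one_lt_div hx).2 hlt
    have hratio' : x / y < 1 := (div_lt_one hy).2 hlt
    rw [if_neg hlt.not_ge, max_eq_right (hratio'.trans hratio).le, max_eq_right (by linarith)]
    field_simp

lemma continuousAt_RstarX {p : ℝ × ℝ} (hx : 0 < p.1) (hy : 0 < p.2) :
    ContinuousAt (fun p : ℝ × ℝ => RstarX p.1 p.2) p := by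
  have hcont : ContinuousAt (fun p : ℝ × ℝ => max (1 / 2) (p.2 / p.1 - 1 / 2)) p :=
    continuousAt_const.max
      ((continuousAt_snd.div continuousAt_fst hx.ne').sub continuousAt_const)
  refine hcont.congr ?_
  filter_upwards [continuousAt_fst.eventually_const_lt hx,
    continuousAt_snd.eventually_const_lt hy] with r hr₁ hr₂
  exact (RstarX_of_pos hr₁ hr₂).symm

lemma measurable_RstarX : Measurable fun p : ℝ × ℝ => RstarX p.1 p.2 := by
  have hzero : MeasurableSet {p : ℝ × ℝ | p.1 = 0 ∧ p.2 = 0} :=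
    (measurableSet_eq_fun measurable_fst measurable_const).inter
      (measurableSet_eq_fun measurable_snd measurable_const)
  unfold RstarX RstarR PstarR
  refine Measurable.ite (measurableSet_eq_fun measurable_snd measurable_const) measurable_const
    (Measurable.mul (Measurable.ite hzero measurable_const ?_) (Measurable.ite hzero
      measurable_const (Measurable.ite (measurableSet_le measurable_snd measurable_fst) ?_ ?_)))
  all_goals fun_prop

variable {f g : ℝ → ℝ} {M : ℝ}

lemma IsE.apply_eq_apply_min_one (hf : IsE f) (s : ℝ) : f s = f (min s 1) := by
  rcases le_total s 1 with hs | hs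
  · rw [min_eq_left hs]
  · rw [min_eq_right hs, hf.2.2.2.1 s hs]

lemma Good.bounds_of_pos (hf : IsE f) (hfM : Good M f) {s : ℝ} (hs : 0 < s) :
    min s 1 / M ≤ f s ∧ f s ≤ M * min s 1 := by
  rw [hf.apply_eq_apply_min_one]
  exact hfM _ ⟨(lt_min hs one_pos).le, min_le_right s 1⟩

lemma Good.pos (hM : 0 < M) (hf : IsE f) (hfM : Good M f) {s : ℝ} (hs : 0 < s) : 0 < f s :=
  (div_pos (lt_min hs one_pos) hM).trans_le (hfM.bounds_of_pos hf hs).1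

lemma Good.RstarX_mem_Icc (hM : 0 < M) (hf : IsE f) (hfM : Good M f) (hg : IsE g)
    (hgM : Good M g) (s : ℝ) : RstarX (f s) (g s) ∈ Set.Icc 0 (max (1 / 2) (M ^ 2)) := by
  rcases le_or_gt s 0 with hs | hs
  · rw [hf.2.2.1 s hs, hg.2.2.1 s hs, RstarX_zero_zero]
    exact ⟨by norm_num, le_max_left _ _⟩
  · have hfs := hfM.pos hM hf hs
    have hratio : g s / f s ≤ M ^ 2 := by
      have hlower := (div_le_iff₀ hM).1 (hfM.bounds_of_pos hf hs).1
      rw [div_le_iff₀ hfs]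
      calc g s ≤ M * min s 1 := (hgM.bounds_of_pos hg hs).2
        _ ≤ M * (f s * M) := by gcongr
        _ = M ^ 2 * f s := by ring
    rw [RstarX_of_pos hfs (hgM.pos hM hg hs)]
    exact ⟨le_max_of_le_left (by norm_num), max_le_max_left _ (by linarith)⟩

lemma IsE.measurable_RstarX_comp (hf : IsE f) (hg : IsE g) :
    Measurable fun s => RstarX (f s) (g s) :=
  measurable_RstarX.comp (hf.1.measurable.prodMk hg.1.measurable)

lemma Good.tendsto_RstarX {ι : Type*} {l : Filter ι} {fn gn : ι → ℝ → ℝ} (hM : 0 < M)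
    (hf : IsE f) (hfM : Good M f) (hg : IsE g) (hgM : Good M g) (hfn : ∀ i, IsE (fn i))
    (hgn : ∀ i, IsE (gn i)) {s : ℝ} (hf_lim : Tendsto (fun i => fn i s) l (𝓝 (f s)))
    (hg_lim : Tendsto (fun i => gn i s) l (𝓝 (g s))) :
    Tendsto (fun i => RstarX (fn i s) (gn i s)) l (𝓝 (RstarX (f s) (g s))) := by
  rcases le_or_gt s 0 with hs | hs
  · simp only [fun i => (hfn i).2.2.1 s hs, fun i => (hgn i).2.2.1 s hs, hf.2.2.1 s hs,
      hg.2.2.1 s hs]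
    exact tendsto_const_nhds
  · exact (continuousAt_RstarX (p := (f s, g s)) (hfM.pos hM hf hs)
      (hgM.pos hM hg hs)).tendsto.comp (hf_lim.prodMk_nhds hg_lim)

end CrossTermWeight

lemma tendsto_levyDist_of_tendsto_dE2 {ι : Type*} {l : Filter ι} {f : (ℝ → ℝ) × (ℝ → ℝ)}
    {fn : ι → (ℝ → ℝ) × (ℝ → ℝ)} (hconv : Tendsto (fun i => dE2 (fn i) f) l (𝓝 0)) :
    Tendsto (fun i => levyDist (fn i).1 f.1) l (𝓝 0) ∧
      Tendsto (fun i => levyDist (fn i).2 f.2) l (𝓝 0) :=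
  ⟨squeeze_zero (fun _ => levyDist_nonneg _ _) (fun _ => le_max_left _ _) hconv,
    squeeze_zero (fun _ => levyDist_nonneg _ _) (fun _ => le_max_right _ _) hconv⟩

theorem limsup_sqrt_cross_term_general {ι : Type*} {l : Filter ι} [l.NeBot]
    [l.IsCountablyGenerated] {a b M : ℝ} (hab : a ≤ b) (hM : 0 < M)
    {f : (ℝ → ℝ) × (ℝ → ℝ)} {fn : ι → (ℝ → ℝ) × (ℝ → ℝ)}
    (hf : IsE f.1 ∧ IsE f.2 ∧ Good M f.1 ∧ Good M f.2)
    (hfn : ∀ i, IsE (fn i).1 ∧ IsE (fn i).2 ∧ Good M (fn i).1 ∧ Good M (fn i).2)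
    (hconv : Tendsto (fun i => dE2 (fn i) f) l (𝓝 0)) :
    limsup (fun i => ∫ s in a..b, √(RstarX ((fn i).1 s) ((fn i).2 s) * deriv (fn i).1 s)) l ≤
      ∫ s in a..b, √(RstarX (f.1 s) (f.2 s) * deriv f.1 s) := by
  obtain ⟨hE₁, hE₂, hM₁, hM₂⟩ := hf
  choose hnE₁ hnE₂ hnM₁ hnM₂ using hfn
  obtain ⟨hlevy₁, hlevy₂⟩ := tendsto_levyDist_of_tendsto_dE2 hconv
  have hlim₁ := IsE.ae_tendsto_of_tendsto_levyDist hnE₁ hE₁ hlevy₁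
  have hlim₂ := IsE.ae_tendsto_of_tendsto_levyDist hnE₂ hE₂ hlevy₂
  refine limsup_integral_sqrt_mul_deriv_le (C := ⟨max (1 / 2) (M ^ 2), by positivity⟩)
    (fun i => ((hnE₁ i).measurable_RstarX_comp (hnE₂ i)).aestronglyMeasurable)
    (fun i => (hnM₁ i).RstarX_mem_Icc hM (hnE₁ i) (hnE₂ i) (hnM₂ i))
    (fun i => (hnE₁ i).1) hE₁.1 ?_ hlim₁ hab
  filter_upwards [hlim₁, hlim₂] with s hs₁ hs₂
  exact hM₁.tendsto_RstarX hM hE₁ hE₂ hM₂ hnE₁ hnE₂ hs₁ hs₂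

/-- Upper semicontinuity of the cross term: if `f, f_n ∈ G_M²`, `f` is differentiable on
`[a,b]` and `d(f_n, f) → 0`, then
`limsup ∫_a^b √(R*_X(f_n) f'_{n,X}) ≤ ∫_a^b √(R*_X(f) f'_X)`. -/
theorem limsup_sqrt_cross_term (a b M : ℝ) (ha : 0 ≤ a) (hab : a < b) (hb : b ≤ 1)
    (hM : 1 < M) (f : (ℝ → ℝ) × (ℝ → ℝ)) (fn : ℕ → (ℝ → ℝ) × (ℝ → ℝ))
    (hf : IsE f.1 ∧ IsE f.2 ∧ Good M f.1 ∧ Good M f.2)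
    (hfn : ∀ n, IsE (fn n).1 ∧ IsE (fn n).2 ∧ Good M (fn n).1 ∧ Good M (fn n).2)
    (hdiff : ∀ s ∈ Set.Icc a b, DifferentiableAt ℝ f.1 s ∧ DifferentiableAt ℝ f.2 s)
    (hconv : Tendsto (fun n => dE2 (fn n) f) atTop (nhds 0)) :
    Filter.limsup
        (fun n => ∫ s in a..b,
          Real.sqrt (RstarX ((fn n).1 s) ((fn n).2 s) * deriv (fn n).1 s)) atTop
      ≤ ∫ s in a..b, Real.sqrt (RstarX (f.1 s) (f.2 s) * deriv f.1 s) := by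
  exact limsup_sqrt_cross_term_general hab.le (zero_lt_one.trans hM) hf hfn hconv
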